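/- For all positive integers m, m̃, the relation δ(m, m̃) holds if and only if m divides m̃. -/

import Mathlib

/-!
STATEMENT 18: δ(m, m̃) holds if and only if m divides m̃.
-/

namespace Stmt18

/-- `μ(m, N)`: `g(n + m) = g(n)` for every positive integer `n ≤ N`. -/
def mu (g : ℤ → ℤ) (m N : ℤ) : Prop :=
  ∀ n : ℤ, 0 < n → n ≤ N → g (n + m) = g n

/-- `λ(m, N)`: there is a positive integer `n` with `μ(n, N)` and `μ(n + m, N)`. -/
def lam (g : ℤ → ℤ) (m N : ℤ) : Prop :=
  ∃ n : ℤ, 0 < n ∧ mu g n N ∧ mu g (n + m) N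

/-- `κ(m, N)`. -/
def kap (g : ℤ → ℤ) (m N : ℤ) : Prop :=
  ∃ M : ℤ, 0 < M ∧ ∀ h : ℤ, 0 < h → g h = 1 → lam g h M →
    ∀ L : ℤ, 0 < L → ∃ n : ℤ, 0 < n ∧ lam g n L ∧ mu g n N ∧ g (h + m + n) = 1

/-- `ν(m, m̃, N)`. -/
def nu (g : ℤ → ℤ) (m mt N : ℤ) : Prop :=
  ∃ L : ℤ, 0 < L ∧ ∀ n : ℤ, 0 < n → lam g n L → kap g (m + n) L → kap g (mt + n) N

/-- `δ(m, m̃)`. -/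
def del (g : ℤ → ℤ) (m mt : ℤ) : Prop :=
  ∀ N : ℤ, 0 < N → ∃ L : ℤ, 0 < L ∧ ∀ n : ℤ, 0 < n →
    nu g (m + n) m L → kap g n L → nu g (mt + n) mt N

/-!
Let `a` be the class of `α` in `ℝ/ℤ`. Since `(n + m)²a = n²a + n • 2ma + m²a`, a shift by `m`
preserves `g` on long intervals exactly when `(2ma, m²a)` is close to `0`. Each relation, read as
the filter of those arguments that satisfy it at every scale `N`, thereby becomes a convergence in
the circle: `μ` says `(2ma, m²a) → 0`, `λ` says `2ma → 0`, `κ` says `m²a → 0`, and `ν` says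
`m̃²a - m²a → 0`. So `δ(m, m̃)` means that `m • 2na → 0` and `n²a → 0` together force
`m̃ • 2na → 0`. As `(2na, n²a)` is dense in the torus, this happens exactly when `mx = 0` implies
`m̃x = 0` for all `x` in the circle, that is, when `m ∣ m̃`.

The density statements come from one observation: the limits of `(k²a, kb)` along those `k` with
`2ka → 0` form a closed subsemigroup, hence a subgroup, of a compact group. If `l_k` is chosen so
that `k • 2l_k a → x`, then expanding `(k + l_k)²a` exhibits `(x, 0)` as an element of it.
-/

open Filter Set Topology

theorem tendsto_curry_nhds {X Y Z : Type*} [TopologicalSpace Z] {F : Filter X} {G : Filter Y}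
    {h : X → Y → Z} {φ : X → Z} {z : Z}
    (h_inner : ∀ x, Tendsto (h x) G (𝓝 (φ x))) (h_outer : Tendsto φ F (𝓝 z)) :
    Tendsto (fun p : X × Y => h p.1 p.2) (F.curry G) (𝓝 z) := by
  intro s hs
  rw [mem_map, mem_curry_iff]
  filter_upwards [h_outer (eventually_mem_nhds_iff.2 hs)] with x hx using h_inner x hx

theorem neg_mem_of_isClosed {G : Type*} [AddGroup G] [TopologicalSpace G] [IsTopologicalAddGroup G]
    [CompactSpace G] (S : AddSubsemigroup G) (hS : IsClosed (S : Set G)) {x : G} (hx : x ∈ S) :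
    -x ∈ S := by
  have nsmul_mem : ∀ n : ℕ, 1 ≤ n → n • x ∈ S := fun n hn => by
    induction n, hn using Nat.le_induction with
    | base => simpa using hx
    | succ n _ ih => rw [succ_nsmul]; exact S.add_mem ih hx
  have h_cluster := mapClusterPt_self_zsmul_atTop_nsmul x (-1)
  rw [neg_one_zsmul] at h_cluster
  exact isClosed_iff_clusterPt.1 hS _ <| h_cluster.clusterPt.mono <|
    tendsto_principal.2 <| (eventually_ge_atTop 1).mono nsmul_mem

theorem add_sq_smul {R M : Type*} [CommRing R] [AddCommGroup M] [Module R M] (k l : R) (a : M) :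
    (k + l) ^ 2 • a = k ^ 2 • a + k • (2 * l) • a + l ^ 2 • a := by
  module

section Recurrence

variable {A H : Type*} [AddCommGroup A] [TopologicalSpace A]
  [AddCommGroup H] [TopologicalSpace H]

/-- The filter of positive integers `n` along which `2na → 0`. -/
def recurrence (a : A) : Filter ℤ :=
  comap (fun n => (2 * n) • a) (𝓝 0) ⊓ 𝓟 (Ioi 0)

theorem tendsto_recurrence_iff {X : Type*} {F : Filter X} {u : X → ℤ} {a : A} :
    Tendsto u F (recurrence a) ↔
      Tendsto (fun x => (2 * u x) • a) F (𝓝 0) ∧ ∀ᶠ x in F, 0 < u x := by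
  simp only [recurrence, tendsto_inf, tendsto_comap_iff, tendsto_principal, Function.comp_def,
    mem_Ioi]

theorem tendsto_two_mul_zsmul_recurrence (a : A) :
    Tendsto (fun n : ℤ => (2 * n) • a) (recurrence a) (𝓝 0) :=
  (tendsto_recurrence_iff.1 tendsto_id).1

theorem eventually_pos_recurrence (a : A) : ∀ᶠ n in recurrence a, 0 < n :=
  (tendsto_recurrence_iff.1 tendsto_id).2

theorem recurrence_le_cofinite [T1Space A] {a : A} (ha : addOrderOf a = 0) :
    recurrence a ≤ cofinite := by
  refine le_cofinite_iff_eventually_ne.2 fun k => ?_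
  rcases eq_or_ne k 0 with rfl | hk
  · exact (eventually_pos_recurrence a).mono fun n hn => hn.ne'
  · have h_ne : (0 : A) ≠ (2 * k) • a := fun h0 => by
      simpa [ha, hk] using addOrderOf_dvd_iff_zsmul_eq_zero.2 h0.symm
    filter_upwards [(tendsto_two_mul_zsmul_recurrence a).eventually_ne h_ne] with n hn
    rintro rfl
    exact hn rfl

variable [IsTopologicalAddGroup A] [IsTopologicalAddGroup H]

theorem tendsto_add_sq_zsmul_iff {a x : A} {F : Filter ℤ} (hF : F ≤ recurrence a) (k : ℤ) :
    Tendsto (fun n : ℤ => (k + n) ^ 2 • a) F (𝓝 (k ^ 2 • a + x)) ↔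
      Tendsto (fun n : ℤ => n ^ 2 • a) F (𝓝 x) := by
  have h_shift : Tendsto (fun n : ℤ => k ^ 2 • a + k • (2 * n) • a) F (𝓝 (k ^ 2 • a)) := by
    have h_cross := ((tendsto_two_mul_zsmul_recurrence a).mono_left hF).const_smul k
    simpa only [smul_zero, add_zero] using h_cross.const_add (k ^ 2 • a)
  constructor <;> intro h
  · simpa only [add_sq_smul, add_sub_cancel_left] using h.sub h_shift
  · simpa only [add_sq_smul] using h_shift.add h

theorem tendsto_add_curry_recurrence {a : A} {U V : Filter ℤ} (hU : U ≤ recurrence a)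
    (hV : V ≤ recurrence a) :
    Tendsto (fun p : ℤ × ℤ => p.1 + p.2) (U.curry V) (recurrence a) := by
  refine tendsto_recurrence_iff.2 ⟨?_, ?_⟩
  · simp only [mul_add, add_zsmul]
    refine tendsto_curry_nhds (h := fun k l => (2 * k) • a + (2 * l) • a)
      (φ := fun k => (2 * k) • a) (fun k => ?_)
      ((tendsto_two_mul_zsmul_recurrence a).mono_left hU)
    have hl := ((tendsto_two_mul_zsmul_recurrence a).mono_left hV).const_add ((2 * k) • a)
    rwa [add_zero] at hl
  · rw [eventually_curry_iff]
    filter_upwards [hU (eventually_pos_recurrence a)] with k hk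
    filter_upwards [hV (eventually_pos_recurrence a)] with l hl using add_pos hk hl

/-- The subsequential limits of `(k²a, kb)` along the positive integers `k` with `2ka → 0`. -/
def recurrenceLimits (a : A) (b : H) : AddSubsemigroup (A × H) where
  carrier := {p | MapClusterPt p (recurrence a) fun k => (k ^ 2 • a, k • b)}
  add_mem' {p q} hp hq := by
    obtain ⟨U, hU, hUp⟩ := mapClusterPt_iff_ultrafilter.1 hp
    obtain ⟨V, hV, hVq⟩ := mapClusterPt_iff_ultrafilter.1 hq
    have h_sum : Tendsto (fun x : ℤ × ℤ => ((x.1 + x.2) ^ 2 • a, (x.1 + x.2) • b))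
        ((U : Filter ℤ).curry (V : Filter ℤ)) (𝓝 (p + q)) := by
      refine tendsto_curry_nhds (h := fun k l => ((k + l) ^ 2 • a, (k + l) • b))
        (φ := fun k => (k ^ 2 • a, k • b) + q) (fun k => ?_) (hUp.add_const q)
      have h_cross : Tendsto (fun l : ℤ => (k • (2 * l) • a, (0 : H))) V (𝓝 0) := by
        have h_fst := ((tendsto_two_mul_zsmul_recurrence a).mono_left hV).const_smul k
        rw [smul_zero] at h_fst
        exact h_fst.prodMk_nhds tendsto_const_nhds
      simpa [add_sq_smul, add_zsmul] using
        (h_cross.const_add (k ^ 2 • a, k • b)).add hVq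
    have : ((U : Filter ℤ).curry (V : Filter ℤ)).NeBot :=
      (frequently_true_iff_neBot _).1 ((frequently_curry_iff _).2 (by simp))
    exact h_sum.mapClusterPt.of_comp (tendsto_add_curry_recurrence hU hV)

theorem mem_recurrenceLimits {a : A} {b : H} {p : A × H} :
    p ∈ recurrenceLimits a b ↔ MapClusterPt p (recurrence a) fun k => (k ^ 2 • a, k • b) :=
  Iff.rfl

theorem isClosed_recurrenceLimits (a : A) (b : H) :
    IsClosed (recurrenceLimits a b : Set (A × H)) :=
  isClosed_setOfPred_clusterPt

end Recurrence

section Circle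

theorem exists_real_abs_eq_norm (c : UnitAddCircle) :
    ∃ r : ℝ, (r : UnitAddCircle) = c ∧ |r| = ‖c‖ := by
  obtain ⟨r, rfl⟩ := QuotientAddGroup.mk_surjective c
  refine ⟨r - round r, ?_, UnitAddCircle.norm_eq.symm⟩
  have h_round : ((round r : ℝ) : UnitAddCircle) = 0 :=
    AddCircle.coe_eq_zero_iff 1 |>.2 ⟨round r, by simp⟩
  rw [AddCircle.coe_sub, h_round, sub_zero]

theorem norm_coe_le_abs (r : ℝ) : ‖(r : UnitAddCircle)‖ ≤ |r| := by
  simpa [UnitAddCircle.norm_eq] using round_le r 0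

theorem tendsto_abs_intCast_cofinite : Tendsto (fun k : ℤ => |(k : ℝ)|) cofinite atTop :=
  tendsto_norm_cocompact_atTop.comp Int.tendsto_coe_cofinite

theorem exists_zsmul_eq_tendsto_zero (x : ℤ → UnitAddCircle) :
    ∃ θ : ℤ → UnitAddCircle, (∀ k ≠ 0, k • θ k = x k) ∧ Tendsto θ cofinite (𝓝 0) := by
  choose r hr hr_abs using fun k => exists_real_abs_eq_norm (x k)
  refine ⟨fun k => ((r k / k : ℝ) : UnitAddCircle), fun k hk => ?_, ?_⟩
  · rw [← AddCircle.coe_zsmul, zsmul_eq_mul, mul_div_cancel₀ _ (Int.cast_ne_zero.2 hk), hr]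
  · have h_lim := tendsto_abs_intCast_cofinite.inv_tendsto_atTop.const_mul (1 / 2 : ℝ)
    rw [mul_zero] at h_lim
    refine squeeze_zero_norm (fun k => ?_) h_lim
    calc ‖((r k / k : ℝ) : UnitAddCircle)‖ ≤ |r k / k| := norm_coe_le_abs _
      _ = |r k| * |(k : ℝ)|⁻¹ := by rw [abs_div, div_eq_mul_inv]
      _ ≤ 1 / 2 * |(k : ℝ)|⁻¹ := by
        gcongr
        simpa [hr_abs] using AddCircle.norm_le_half_period 1 one_ne_zero (x := x k)

theorem exists_norm_eq_norm_add_eq (c : UnitAddCircle) {u : ℝ} (hu : 0 ≤ u)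
    (huc : u + ‖c‖ ≤ 1 / 2) : ∃ y : UnitAddCircle, ‖y‖ = u ∧ ‖y + c‖ = u + ‖c‖ := by
  obtain ⟨r, rfl, hr⟩ := exists_real_abs_eq_norm c
  have norm_coe : ∀ z : ℝ, |z| ≤ 1 / 2 → ‖(z : UnitAddCircle)‖ = |z| := fun z hz =>
    (AddCircle.norm_coe_eq_abs_iff 1 one_ne_zero).2 (by simpa using hz)
  rw [← hr] at huc ⊢
  obtain ⟨z, hz, hzr⟩ : ∃ z : ℝ, |z| = u ∧ |z + r| = u + |r| := by
    rcases le_total 0 r with h | h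
    · exact ⟨u, abs_of_nonneg hu, by rw [abs_of_nonneg (by positivity), abs_of_nonneg h]⟩
    · exact ⟨-u, by rw [abs_neg, abs_of_nonneg hu],
        by rw [abs_of_nonpos (by linarith), abs_of_nonpos h]; ring⟩
  refine ⟨z, ?_, ?_⟩
  · rw [norm_coe z (by linarith [abs_nonneg r]), hz]
  · rw [← AddCircle.coe_add, norm_coe _ (by linarith), hzr]

theorem norm_le_of_forall_norm_add_le {ρ ε : ℝ} (hρ : 0 < ρ) (hρε : ρ + ε < 1 / 2)
    {c : UnitAddCircle} (h : ∀ y : UnitAddCircle, ‖y‖ < ρ → ‖y + c‖ ≤ ρ + ε) : ‖c‖ ≤ ε := by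
  have h_le : ∀ u, 0 ≤ u → u < ρ → u + ‖c‖ ≤ 1 / 2 → u + ‖c‖ ≤ ρ + ε := fun u hu huρ huc => by
    obtain ⟨y, hy, hyc⟩ := exists_norm_eq_norm_add_eq c hu huc
    exact hyc ▸ h y (hy ▸ huρ)
  have hc : ‖c‖ ≤ 1 / 2 := by simpa using AddCircle.norm_le_half_period 1 one_ne_zero (x := c)
  have hρc : ρ ≤ 1 / 2 - ‖c‖ := by
    by_contra! hlt
    linarith [h_le (1 / 2 - ‖c‖) (by linarith) hlt (by linarith)]
  suffices ρ ≤ ρ + ε - ‖c‖ by linarith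
  refine le_of_forall_lt_imp_le_of_dense fun u hu => ?_
  rcases le_total 0 u with hu0 | hu0
  · linarith [h_le u hu0 hu (by linarith)]
  · linarith [h_le 0 le_rfl hρ (by linarith)]

theorem exists_addOrderOf_eq {a : UnitAddCircle} (ha : addOrderOf a = 0) (n : ℕ) :
    ∃ x : UnitAddCircle, addOrderOf x = n := by
  rcases n.eq_zero_or_pos with rfl | hn
  · exact ⟨a, ha⟩
  · exact ⟨_, AddCircle.addOrderOf_period_div hn⟩

theorem addOrderOf_coe_eq_zero {α : ℝ} (hα : Irrational α) :
    addOrderOf (α : UnitAddCircle) = 0 := by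
  rw [← AddCircle.denseRange_zsmul_iff, AddCircle.denseRange_zsmul_coe_iff]
  simpa using hα

end Circle

section RecurrenceCircle

variable {a : UnitAddCircle}

theorem mapClusterPt_two_mul_zsmul (ha : addOrderOf a = 0) (x : UnitAddCircle) :
    MapClusterPt x (𝓟 (Ioi (0 : ℤ))) fun n : ℤ => (2 * n) • a := by
  have h_dense : DenseRange fun n : ℤ => n • (2 • a) := by
    rw [AddCircle.denseRange_zsmul_iff, addOrderOf_nsmul' _ two_ne_zero, ha, Nat.zero_div]
  have h_nat : MapClusterPt x atTop fun n : ℕ => n • (2 • a) :=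
    ((mapClusterPt_atTop_nsmul_tfae x (2 • a)).out 3 0).1 (h_dense x)
  refine MapClusterPt.of_comp (φ := fun n : ℕ => (n : ℤ)) (p := atTop) ?_ ?_
  · exact tendsto_principal.2 ((eventually_gt_atTop 0).mono fun n hn => Int.natCast_pos.2 hn)
  · convert h_nat using 2 with n
    simp only [Function.comp_apply]
    module

theorem exists_tendsto_recurrence (ha : addOrderOf a = 0) (x : UnitAddCircle) :
    ∃ l : ℤ → ℤ, Tendsto l cofinite (recurrence a) ∧
      Tendsto (fun k => k • (2 * l k) • a) cofinite (𝓝 x) := by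
  obtain ⟨θ, hθx, hθ⟩ := exists_zsmul_eq_tendsto_zero fun _ => x
  have h_approx (k : ℤ) : ∃ l : ℤ, 0 < l ∧ ‖(2 * l) • a - θ k‖ < ((|(k : ℝ)| + 1) ^ 2)⁻¹ := by
    have h_freq := (mapClusterPt_two_mul_zsmul ha (θ k)).frequently
      (Metric.ball_mem_nhds (θ k) (ε := ((|(k : ℝ)| + 1) ^ 2)⁻¹) (by positivity))
    simpa [dist_eq_norm] using frequently_principal.1 h_freq
  choose l hl_pos hl using h_approx
  have h_inv : Tendsto (fun k : ℤ => (|(k : ℝ)| + 1)⁻¹) cofinite (𝓝 0) :=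
    (tendsto_abs_intCast_cofinite.atTop_add tendsto_const_nhds).inv_tendsto_atTop
  have h_err : Tendsto (fun k => (2 * l k) • a - θ k) cofinite (𝓝 0) := by
    refine squeeze_zero_norm (fun k => (hl k).le.trans ?_) h_inv
    gcongr
    nlinarith [abs_nonneg (k : ℝ)]
  have h_smul_err : Tendsto (fun k : ℤ => k • ((2 * l k) • a - θ k)) cofinite (𝓝 0) := by
    refine squeeze_zero_norm (fun k => ?_) h_inv
    calc ‖k • ((2 * l k) • a - θ k)‖ ≤ |(k : ℝ)| * ‖(2 * l k) • a - θ k‖ := by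
          simpa [Int.norm_eq_abs] using norm_zsmul_le k ((2 * l k) • a - θ k)
      _ ≤ (|(k : ℝ)| + 1) * ((|(k : ℝ)| + 1) ^ 2)⁻¹ := by gcongr; exacts [by simp, (hl k).le]
      _ = (|(k : ℝ)| + 1)⁻¹ := by field_simp
  refine ⟨l, tendsto_recurrence_iff.2 ⟨by simpa using h_err.add hθ, .of_forall hl_pos⟩, ?_⟩
  refine (zero_add x ▸ h_smul_err.add_const x).congr' ?_
  filter_upwards [(finite_singleton (0 : ℤ)).compl_mem_cofinite] with k hk
  rw [smul_sub, hθx k hk, sub_add_cancel]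

theorem neBot_recurrence (ha : addOrderOf a = 0) : (recurrence a).NeBot := by
  rw [recurrence, inf_comm, neBot_inf_comap_iff_map, inf_comm]
  exact mapClusterPt_two_mul_zsmul ha 0

variable {H : Type*} [AddCommGroup H] [TopologicalSpace H] [IsTopologicalAddGroup H]
  [CompactSpace H]

theorem mk_zero_mem_recurrenceLimits (ha : addOrderOf a = 0) (b : H) (x : UnitAddCircle) :
    (x, 0) ∈ recurrenceLimits a b := by
  have := neBot_recurrence ha
  obtain ⟨l, hl, hlx⟩ := exists_tendsto_recurrence ha x
  let U := Ultrafilter.of (recurrence a)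
  have hU : ↑U ≤ recurrence a := Ultrafilter.of_le _
  have hU_cofinite : (U : Filter ℤ) ≤ cofinite := hU.trans (recurrence_le_cofinite ha)
  let f : ℤ → UnitAddCircle × H := fun k => (k ^ 2 • a, k • b)
  obtain ⟨p, hp⟩ : ∃ p, Tendsto f U (𝓝 p) := ⟨_, (U.map f).le_nhds_lim⟩
  obtain ⟨q, hq⟩ : ∃ q, Tendsto (f ∘ l) U (𝓝 q) := ⟨_, (U.map (f ∘ l)).le_nhds_lim⟩
  have hlU : Tendsto l U (recurrence a) := hl.mono_left hU_cofinite
  have hp_mem : p ∈ recurrenceLimits a b := (hp.mapClusterPt).mono hU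
  have hq_mem : q ∈ recurrenceLimits a b := hq.mapClusterPt.of_comp hlU
  have h_sum_mem : p + (x, 0) + q ∈ recurrenceLimits a b := by
    have h_sum_rec : Tendsto (fun k => k + l k) U (recurrence a) := by
      refine tendsto_recurrence_iff.2 ⟨?_, ?_⟩
      · simpa [mul_add, add_zsmul] using
          ((tendsto_two_mul_zsmul_recurrence a).mono_left hU).add (tendsto_recurrence_iff.1 hlU).1
      · filter_upwards [hU (eventually_pos_recurrence a), hlU (eventually_pos_recurrence a)]
          with k hk hlk using add_pos hk hlk
    have h_sum : Tendsto (f ∘ fun k => k + l k) U (𝓝 (p + (x, 0) + q)) := by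
      have h_cross : Tendsto (fun k => (k • (2 * l k) • a, (0 : H))) U (𝓝 (x, 0)) :=
        (hlx.mono_left hU_cofinite).prodMk_nhds tendsto_const_nhds
      refine ((hp.add h_cross).add hq).congr fun k => ?_
      simp [f, add_sq_smul, add_zsmul]
    exact h_sum.mapClusterPt.of_comp h_sum_rec
  have neg_mem {r} (hr : r ∈ recurrenceLimits a b) : -r ∈ recurrenceLimits a b :=
    neg_mem_of_isClosed _ (isClosed_recurrenceLimits a b) hr
  have h_cancel : (x, 0) = p + (x, 0) + q + -q + -p := by abel
  rw [h_cancel]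
  exact add_mem (add_mem h_sum_mem (neg_mem hq_mem)) (neg_mem hp_mem)

theorem exists_ultrafilter_tendsto_sq (ha : addOrderOf a = 0) (b : H) (x : UnitAddCircle) :
    ∃ U : Ultrafilter ℤ, ↑U ≤ recurrence a ∧ Tendsto (fun n : ℤ => n ^ 2 • a) U (𝓝 x) ∧
      Tendsto (fun n : ℤ => n • b) U (𝓝 0) := by
  obtain ⟨U, hU, hUx⟩ := mapClusterPt_iff_ultrafilter.1
    (mem_recurrenceLimits.1 (mk_zero_mem_recurrenceLimits ha b x))
  exact ⟨U, hU, (Prod.tendsto_iff _ _).1 hUx⟩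

theorem exists_ultrafilter_tendsto_two_mul_sq (ha : addOrderOf a = 0) (x y : UnitAddCircle) :
    ∃ U : Ultrafilter ℤ, ↑U ≤ 𝓟 (Ioi (0 : ℤ)) ∧
      Tendsto (fun n : ℤ => (2 * n) • a) U (𝓝 x) ∧ Tendsto (fun n : ℤ => n ^ 2 • a) U (𝓝 y) := by
  let f : ℤ → UnitAddCircle × UnitAddCircle := fun n => ((2 * n) • a, n ^ 2 • a)
  have h_closed : IsClosed {p | MapClusterPt p (𝓟 (Ioi 0)) f} := isClosed_setOfPred_clusterPt
  have h_orbit : ∀ k : ℤ, 0 < k → MapClusterPt ((2 * k) • a, y) (𝓟 (Ioi 0)) f := fun k hk => by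
    obtain ⟨U, hU, hUy, -⟩ := exists_ultrafilter_tendsto_sq ha (0 : UnitAddCircle) (y - k ^ 2 • a)
    have h_shift : Tendsto (f ∘ (k + ·)) U (𝓝 ((2 * k) • a, y)) := by
      refine Tendsto.prodMk_nhds ?_ ?_
      · simpa [f, mul_add, add_zsmul] using
          ((tendsto_two_mul_zsmul_recurrence a).mono_left hU).const_add ((2 * k) • a)
      · simpa using (tendsto_add_sq_zsmul_iff hU k).2 hUy
    refine h_shift.mapClusterPt.of_comp (tendsto_principal.2 ?_)
    filter_upwards [hU (eventually_pos_recurrence a)] with l hl using add_pos hk hl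
  obtain ⟨V, hV, hVx⟩ := mapClusterPt_iff_ultrafilter.1 (mapClusterPt_two_mul_zsmul ha x)
  have h_mem : MapClusterPt (x, y) (𝓟 (Ioi 0)) f :=
    h_closed.mem_of_tendsto (hVx.prodMk_nhds tendsto_const_nhds)
      (mem_of_superset (hV (mem_principal_self _)) h_orbit)
  obtain ⟨U, hU, hUxy⟩ := mapClusterPt_iff_ultrafilter.1 h_mem
  exact ⟨U, hU, (Prod.tendsto_iff _ _).1 hUxy⟩

end RecurrenceCircle

section Scale

variable {X : Type*} {P : X → ℤ → Prop}

/-- The filter generated by the sets `{x | P x N}` with `N > 0`. When `P x` is antitone, a property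
holds along it if and only if it follows from `P x N` at some scale `N`. -/
def scaleFilter (P : X → ℤ → Prop) : Filter X :=
  ⨅ N > 0, 𝓟 {x | P x N}

theorem le_scaleFilter_iff {F : Filter X} :
    F ≤ scaleFilter P ↔ ∀ N > 0, ∀ᶠ x in F, P x N := by
  simp only [scaleFilter, le_iInf_iff, le_principal_iff, Filter.Eventually]

theorem tendsto_scaleFilter_iff {Y : Type*} {f : Y → X} {F : Filter Y} :
    Tendsto f F (scaleFilter P) ↔ ∀ N > 0, ∀ᶠ y in F, P (f y) N :=
  le_scaleFilter_iff

theorem comap_scaleFilter {Y : Type*} (f : Y → X) (P : X → ℤ → Prop) :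
    comap f (scaleFilter P) = scaleFilter fun y => P (f y) := by
  simp only [scaleFilter, comap_iInf, comap_principal, preimage_ofPred_eq]

theorem scaleFilter_inf (P Q : X → ℤ → Prop) :
    scaleFilter P ⊓ scaleFilter Q = scaleFilter fun x N => P x N ∧ Q x N := by
  simp only [scaleFilter, ← iInf_inf_eq, inf_principal, ofPred_and]

theorem hasBasis_scaleFilter (hP : ∀ x, Antitone (P x)) :
    (scaleFilter P).HasBasis (0 < ·) fun N => {x | P x N} := by
  refine hasBasis_biInf_principal' (fun i hi j _ => ?_) ⟨1, one_pos⟩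
  exact ⟨max i j, lt_max_of_lt_left hi, fun x hx => hP x (le_max_left i j) hx,
    fun x hx => hP x (le_max_right i j) hx⟩

theorem hasBasis_scaleFilter_inf_pos {P : ℤ → ℤ → Prop} (hP : ∀ n, Antitone (P n)) :
    (scaleFilter P ⊓ 𝓟 (Ioi 0)).HasBasis (0 < ·) fun N => {n | 0 < n ∧ P n N} := by
  simpa only [inter_comm, inter_def, mem_Ioi, mem_ofPred_eq] using
    (hasBasis_scaleFilter hP).inf_principal (Ioi 0)

theorem exists_forall_norm_lt_of_tendsto {E : Type*} [SeminormedAddGroup E] {f : X → E}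
    (hP : ∀ x, Antitone (P x)) (hf : Tendsto f (scaleFilter P) (𝓝 0)) {ε : ℝ} (hε : 0 < ε) :
    ∃ N > 0, ∀ x, P x N → ‖f x‖ < ε :=
  (hasBasis_scaleFilter hP).eventually_iff.1 (NormedAddGroup.tendsto_nhds_zero.1 hf ε hε)

theorem eventually_forall_eq_imp_of_comap_le {Y : Type*} {f : X → Y} {l : Filter Y}
    (h : comap f l ≤ scaleFilter P) {N : ℤ} (hN : 0 < N) : ∀ᶠ y in l, ∀ x, f x = y → P x N :=
  eventually_comap.1 (le_scaleFilter_iff.1 h N hN)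

end Scale

section Relations

variable (g : ℤ → ℤ)

theorem antitone_mu (m : ℤ) : Antitone (mu g m) :=
  fun _ _ hle h n hn hnN => h n hn (hnN.trans hle)

theorem antitone_lam (m : ℤ) : Antitone (lam g m) :=
  fun _ _ hle ⟨n, hn, h, h'⟩ => ⟨n, hn, antitone_mu g n hle h, antitone_mu g (n + m) hle h'⟩

theorem antitone_kap (m : ℤ) : Antitone (kap g m) := fun _ _ hle ⟨M, hM, h⟩ =>
  ⟨M, hM, fun k hk hgk hkM L hL =>
    let ⟨n, hn, hnL, hnN, hgn⟩ := h k hk hgk hkM L hL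
    ⟨n, hn, hnL, antitone_mu g n hle hnN, hgn⟩⟩

theorem antitone_nu (m mt : ℤ) : Antitone (nu g m mt) := fun _ _ hle ⟨L, hL, h⟩ =>
  ⟨L, hL, fun n hn hnL hmn => antitone_kap g (mt + n) hle (h n hn hnL hmn)⟩

theorem kap_iff {m N : ℤ} :
    kap g m N ↔ ∀ᶠ h in scaleFilter (lam g) ⊓ 𝓟 (Ioi 0), g h = 1 →
      ∃ᶠ n in scaleFilter (lam g) ⊓ 𝓟 (Ioi 0), mu g n N ∧ g (h + m + n) = 1 := by
  have h_basis := hasBasis_scaleFilter_inf_pos (antitone_lam g)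
  simp only [h_basis.eventually_iff, h_basis.frequently_iff, kap, mem_ofPred_eq, and_assoc,
    and_imp]
  exact exists_congr fun M => and_congr_right fun _ => forall₂_congr fun h _ => imp.swap

theorem nu_iff {m mt N : ℤ} :
    nu g m mt N ↔ ∀ᶠ n in scaleFilter (lam g) ⊓ 𝓟 (Ioi 0) ⊓
      comap (m + ·) (scaleFilter (kap g)), kap g (mt + n) N := by
  have h_antitone (n : ℤ) : Antitone fun N => lam g n N ∧ kap g (m + n) N :=
    fun _ _ hle h => ⟨antitone_lam g n hle h.1, antitone_kap g (m + n) hle h.2⟩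
  rw [inf_right_comm, comap_scaleFilter, scaleFilter_inf,
    (hasBasis_scaleFilter_inf_pos h_antitone).eventually_iff]
  simp only [nu, mem_ofPred_eq, and_imp]

theorem del_iff {m mt : ℤ} :
    del g m mt ↔ Tendsto (fun n => (mt + n, mt))
      (comap (fun n => (m + n, m)) (scaleFilter fun p : ℤ × ℤ => nu g p.1 p.2) ⊓
        scaleFilter (kap g) ⊓ 𝓟 (Ioi 0))
      (scaleFilter fun p : ℤ × ℤ => nu g p.1 p.2) := by
  have h_antitone (n : ℤ) : Antitone fun N => nu g (m + n) m N ∧ kap g n N :=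
    fun _ _ hle h => ⟨antitone_nu g (m + n) m hle h.1, antitone_kap g n hle h.2⟩
  rw [comap_scaleFilter, scaleFilter_inf]
  simp only [tendsto_scaleFilter_iff, (hasBasis_scaleFilter_inf_pos h_antitone).eventually_iff,
    del, mem_ofPred_eq, and_imp, gt_iff_lt]

end Relations

section Arc

/-- The indicator function of the times `n` at which `n²a` lies in the open arc of radius `ρ`
about `0`. -/
noncomputable def arcIndicator (a : UnitAddCircle) (ρ : ℝ) : ℤ → ℤ :=
  {n : ℤ | ‖n ^ 2 • a‖ < ρ}.indicator 1

/-- The angle `a` is irrational, the arc of radius `ρ` about `0` is neither empty nor all of the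
circle, and its endpoints avoid the points `n²a` with `n > 0`. -/
structure Admissible (a : UnitAddCircle) (ρ : ℝ) : Prop where
  addOrderOf_eq_zero : addOrderOf a = 0
  pos : 0 < ρ
  lt_half : ρ < 1 / 2
  norm_ne : ∀ n : ℤ, 0 < n → ‖n ^ 2 • a‖ ≠ ρ

variable {a : UnitAddCircle} {ρ : ℝ}

theorem arcIndicator_eq_one_iff {n : ℤ} : arcIndicator a ρ n = 1 ↔ ‖n ^ 2 • a‖ < ρ := by
  simp [arcIndicator, indicator_apply]

theorem arcIndicator_eq_iff {m n : ℤ} :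
    arcIndicator a ρ m = arcIndicator a ρ n ↔ (‖m ^ 2 • a‖ < ρ ↔ ‖n ^ 2 • a‖ < ρ) := by
  simp only [arcIndicator, indicator_apply, mem_ofPred_eq, Pi.one_apply]
  split_ifs <;> simp [*]

theorem neBot_recurrence_inf_comap_add_sq (ha : addOrderOf a = 0) (m : ℤ) :
    (recurrence a ⊓ comap (fun n : ℤ => (m + n) ^ 2 • a) (𝓝 0)).NeBot := by
  obtain ⟨U, hU, hUm, -⟩ :=
    exists_ultrafilter_tendsto_sq ha (0 : UnitAddCircle) (-(m ^ 2 • a))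
  have h_shift := (tendsto_add_sq_zsmul_iff hU m).2 hUm
  rw [add_neg_cancel] at h_shift
  exact U.neBot.mono (le_inf hU (tendsto_iff_comap.1 h_shift))

theorem tendsto_add_sq_inf_comap_add_sq (m k : ℤ) :
    Tendsto (fun n : ℤ => (k + n) ^ 2 • a)
      (recurrence a ⊓ comap (fun n : ℤ => (m + n) ^ 2 • a) (𝓝 0))
      (𝓝 (k ^ 2 • a - m ^ 2 • a)) := by
  rw [sub_eq_add_neg, tendsto_add_sq_zsmul_iff inf_le_left,
    ← tendsto_add_sq_zsmul_iff inf_le_left m, add_neg_cancel]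
  exact tendsto_comap.mono_left inf_le_right

theorem eventually_norm_lt_iff {E : Type*} [SeminormedAddGroup E] {z : E} (hz : ‖z‖ ≠ ρ) :
    ∀ᶠ y in 𝓝 z, (‖y‖ < ρ ↔ ‖z‖ < ρ) := by
  rcases hz.lt_or_gt with h | h
  · filter_upwards [continuous_norm.continuousAt.eventually_lt_const h] with y hy
    simp only [hy, h]
  · filter_upwards [continuous_norm.continuousAt.eventually_const_lt h] with y hy
    simp only [hy.not_gt, h.not_gt]

theorem eq_zero_of_forall_norm_add_le (ha : addOrderOf a = 0) (hρ0 : 0 < ρ) (hρ : ρ < 1 / 2)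
    {b c : UnitAddCircle}
    (h : ∀ n : ℤ, 0 < n → ‖n ^ 2 • a‖ < ρ → ‖n ^ 2 • a + n • b + c‖ ≤ ρ) : b = 0 ∧ c = 0 := by
  have h_affine : ∀ k : ℤ, 0 ≤ k → k • b + c = 0 := fun k hk => by
    refine norm_le_zero_iff.1 (norm_le_of_forall_norm_add_le hρ0 (by linarith) fun y hy => ?_)
    obtain ⟨U, hU, hUy, hUb⟩ := exists_ultrafilter_tendsto_sq ha b (y - k ^ 2 • a)
    have h_sq : Tendsto (fun n : ℤ => (k + n) ^ 2 • a) U (𝓝 y) := by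
      simpa using (tendsto_add_sq_zsmul_iff hU k).2 hUy
    have h_lin : Tendsto (fun n : ℤ => (k + n) • b) U (𝓝 (k • b)) := by
      simpa [add_zsmul] using hUb.const_add (k • b)
    have h_lim := (h_sq.add (h_lin.add_const c)).norm
    refine le_of_tendsto h_lim ?_
    filter_upwards [hU (eventually_pos_recurrence a), h_sq.norm.eventually_lt_const hy]
      with n hn hnρ
    simpa [add_assoc] using h (k + n) (by linarith) hnρ
  have hc : c = 0 := by simpa using h_affine 0 le_rfl
  exact ⟨by simpa [hc] using h_affine 1 zero_le_one, hc⟩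

theorem lam_of_eventually_mu {g : ℤ → ℤ} (ha : addOrderOf a = 0) {m N : ℤ} {θ : UnitAddCircle}
    (hθ : m • θ = -(m ^ 2 • a))
    (h_left : ∀ᶠ z in 𝓝 (θ, (0 : UnitAddCircle)),
      ∀ n : ℤ, ((2 * n) • a, n ^ 2 • a) = z → mu g n N)
    (h_right : ∀ᶠ z in 𝓝 (θ + (2 * m) • a, (0 : UnitAddCircle)),
      ∀ n : ℤ, ((2 * n) • a, n ^ 2 • a) = z → mu g n N) :
    lam g m N := by
  obtain ⟨U, hU, hU_two, hU_sq⟩ := exists_ultrafilter_tendsto_two_mul_sq ha θ 0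
  have h_two : Tendsto (fun n : ℤ => (2 * (n + m)) • a) U (𝓝 (θ + (2 * m) • a)) := by
    simpa [mul_add, add_zsmul] using hU_two.add_const ((2 * m) • a)
  have h_sq : Tendsto (fun n : ℤ => (n + m) ^ 2 • a) U (𝓝 0) := by
    have h_sum := ((hU_two.const_smul m).const_add (m ^ 2 • a)).add hU_sq
    simpa [← add_sq_smul, hθ, add_comm m] using h_sum
  have h_pos : ∀ᶠ n : ℤ in U, 0 < n := hU (mem_principal_self _)
  obtain ⟨n, hn, hn_left, hn_right⟩ := (h_pos.and
    (((hU_two.prodMk_nhds hU_sq).eventually h_left).and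
      ((h_two.prodMk_nhds h_sq).eventually h_right))).exists
  exact ⟨n, hn, hn_left n rfl, hn_right (n + m) rfl⟩

namespace Admissible

theorem scaleFilter_mu (h : Admissible a ρ) :
    scaleFilter (mu (arcIndicator a ρ)) =
      comap (fun n : ℤ => ((2 * n) • a, n ^ 2 • a)) (𝓝 0) := by
  refine le_antisymm (tendsto_iff_comap.1 ?_) (le_scaleFilter_iff.2 fun N _ => ?_)
  · refine tendsto_nhds_of_unique_mapClusterPt fun ⟨b, c⟩ hbc => ?_
    obtain ⟨U, hU, hUbc⟩ := mapClusterPt_iff_ultrafilter.1 hbc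
    obtain ⟨hUb, hUc⟩ := (Prod.tendsto_iff _ _).1 hUbc
    refine Prod.mk_eq_zero.2 (eq_zero_of_forall_norm_add_le h.addOrderOf_eq_zero h.pos h.lt_half
      fun n hn hnρ => ?_)
    have h_lim : Tendsto (fun m : ℤ => ‖(n + m) ^ 2 • a‖) U (𝓝 ‖n ^ 2 • a + n • b + c‖) := by
      simpa only [add_sq_smul] using (((hUb.const_smul n).const_add (n ^ 2 • a)).add hUc).norm
    refine le_of_tendsto h_lim ?_
    filter_upwards [le_scaleFilter_iff.1 hU n hn] with m hm
    exact ((arcIndicator_eq_iff.1 (hm n hn le_rfl)).2 hnρ).le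
  · suffices ∀ n ∈ Ioc 0 N, ∀ᶠ m in comap (fun m : ℤ => ((2 * m) • a, m ^ 2 • a)) (𝓝 0),
        arcIndicator a ρ (n + m) = arcIndicator a ρ n by
      filter_upwards [(eventually_all_finite (finite_Ioc 0 N)).2 this] with m hm n hn hnN
      exact hm n ⟨hn, hnN⟩
    intro n hn
    obtain ⟨h_two, h_sq⟩ := (Prod.tendsto_iff _ _).1
      (tendsto_comap (f := fun m : ℤ => ((2 * m) • a, m ^ 2 • a)) (x := 𝓝 0))
    have h_lim := ((h_two.const_smul n).const_add (n ^ 2 • a)).add h_sq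
    simp only [Prod.fst_zero, Prod.snd_zero, smul_zero, add_zero, ← add_sq_smul] at h_lim
    filter_upwards [h_lim.eventually (eventually_norm_lt_iff (h.norm_ne n hn.1))] with m hm
    exact arcIndicator_eq_iff.2 hm

theorem tendsto_two_mul_mu (h : Admissible a ρ) :
    Tendsto (fun n : ℤ => (2 * n) • a) (scaleFilter (mu (arcIndicator a ρ))) (𝓝 0) :=
  ((Prod.tendsto_iff _ _).1 (tendsto_iff_comap.2 h.scaleFilter_mu.le)).1

theorem tendsto_sq_mu (h : Admissible a ρ) :
    Tendsto (fun n : ℤ => n ^ 2 • a) (scaleFilter (mu (arcIndicator a ρ))) (𝓝 0) :=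
  ((Prod.tendsto_iff _ _).1 (tendsto_iff_comap.2 h.scaleFilter_mu.le)).2

theorem tendsto_two_mul_lam (h : Admissible a ρ) :
    Tendsto (fun m : ℤ => (2 * m) • a) (scaleFilter (lam (arcIndicator a ρ))) (𝓝 0) := by
  refine NormedAddGroup.tendsto_nhds_zero.2 fun ε hε => ?_
  obtain ⟨N, hN, hNε⟩ :=
    exists_forall_norm_lt_of_tendsto (antitone_mu _) h.tendsto_two_mul_mu (half_pos hε)
  filter_upwards [le_scaleFilter_iff.1 le_rfl N hN] with m ⟨n, _, hn, hnm⟩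
  calc ‖(2 * m) • a‖ = ‖(2 * (n + m)) • a - (2 * n) • a‖ := by congr 1; module
    _ ≤ ‖(2 * (n + m)) • a‖ + ‖(2 * n) • a‖ := norm_sub_le _ _
    _ < ε := by linarith [hNε n hn, hNε (n + m) hnm]

theorem scaleFilter_lam (h : Admissible a ρ) :
    scaleFilter (lam (arcIndicator a ρ)) ⊓ 𝓟 (Ioi 0) = recurrence a := by
  refine le_antisymm (inf_le_inf_right _ (tendsto_iff_comap.1 h.tendsto_two_mul_lam))
    (le_inf (le_scaleFilter_iff.2 fun N hN => ?_) inf_le_right)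
  have h_mu := (eventually_forall_eq_imp_of_comap_le h.scaleFilter_mu.ge hN).eventually_nhds
  obtain ⟨θ, hθm, hθ⟩ := exists_zsmul_eq_tendsto_zero fun m => -(m ^ 2 • a)
  have hθ' := hθ.mono_left (recurrence_le_cofinite h.addOrderOf_eq_zero)
  have hθ_add := hθ'.add (tendsto_two_mul_zsmul_recurrence a)
  rw [add_zero] at hθ_add
  have h_const := tendsto_const_nhds (f := recurrence a) (x := (0 : UnitAddCircle))
  filter_upwards [(hθ'.prodMk_nhds h_const).eventually h_mu,
    (hθ_add.prodMk_nhds h_const).eventually h_mu, eventually_pos_recurrence a]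
    with m h_left h_right hm
  exact lam_of_eventually_mu h.addOrderOf_eq_zero (hθm m hm.ne') h_left h_right

theorem kap_iff (h : Admissible a ρ) {m N : ℤ} :
    kap (arcIndicator a ρ) m N ↔ ∀ᶠ k in recurrence a, ‖k ^ 2 • a‖ < ρ →
      ∃ᶠ n in recurrence a, mu (arcIndicator a ρ) n N ∧ ‖(k + m + n) ^ 2 • a‖ < ρ := by
  simp only [Stmt18.kap_iff, h.scaleFilter_lam, arcIndicator_eq_one_iff]

theorem norm_sq_le_of_kap (h : Admissible a ρ) {m N : ℤ} {δ : ℝ} (hδ : ρ + δ < 1 / 2)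
    (hN : ∀ n, mu (arcIndicator a ρ) n N → ‖n ^ 2 • a‖ ≤ δ)
    (hm : kap (arcIndicator a ρ) m N) : ‖m ^ 2 • a‖ ≤ δ := by
  refine norm_le_of_forall_norm_add_le h.pos hδ fun y hy => ?_
  obtain ⟨U, hU, hUy, -⟩ := exists_ultrafilter_tendsto_sq h.addOrderOf_eq_zero (0 : UnitAddCircle) y
  have h_shift := ((tendsto_add_sq_zsmul_iff hU m).2 hUy).norm
  rw [add_comm] at h_shift
  refine le_of_tendsto h_shift ?_
  filter_upwards [hU (h.kap_iff.1 hm), hUy.norm.eventually_lt_const hy] with k hk hkρ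
  have h_freq := hk hkρ
  have h_cross := ((tendsto_two_mul_zsmul_recurrence a).const_smul (k + m)).const_add
    ((k + m) ^ 2 • a)
  rw [smul_zero, add_zero] at h_cross
  rw [add_comm m k]
  refine le_of_tendsto_of_frequently h_cross.norm (h_freq.mono fun n ⟨hn, hnρ⟩ => ?_)
  calc ‖(k + m) ^ 2 • a + (k + m) • (2 * n) • a‖ = ‖(k + m + n) ^ 2 • a - n ^ 2 • a‖ := by
        rw [add_sq_smul (k + m), add_sub_cancel_right]
    _ ≤ ‖(k + m + n) ^ 2 • a‖ + ‖n ^ 2 • a‖ := norm_sub_le _ _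
    _ ≤ ρ + δ := add_le_add hnρ.le (hN n hn)

theorem kap_of_eventually_mu (h : Admissible a ρ) {m N : ℤ}
    (hm : ∀ᶠ z in 𝓝 ((0 : UnitAddCircle), -(m ^ 2 • a)),
      ∀ n : ℤ, ((2 * n) • a, n ^ 2 • a) = z → mu (arcIndicator a ρ) n N) :
    kap (arcIndicator a ρ) m N := by
  have h_diff : Tendsto (fun k : ℤ => ((0 : UnitAddCircle), k ^ 2 • a - (k + m) ^ 2 • a))
      (recurrence a) (𝓝 (0, -(m ^ 2 • a))) := by
    refine tendsto_const_nhds.prodMk_nhds ?_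
    have h_cross := (((tendsto_two_mul_zsmul_recurrence a).const_smul m).const_add (m ^ 2 • a)).neg
    rw [smul_zero, add_zero] at h_cross
    refine h_cross.congr fun k => ?_
    module
  refine h.kap_iff.2 ?_
  filter_upwards [h_diff.eventually hm.eventually_nhds] with k hk hkρ
  obtain ⟨U, hU, hUk, -⟩ := exists_ultrafilter_tendsto_sq h.addOrderOf_eq_zero
    (0 : UnitAddCircle) (k ^ 2 • a - (k + m) ^ 2 • a)
  have h_shift := (tendsto_add_sq_zsmul_iff hU (k + m)).2 hUk
  rw [add_sub_cancel] at h_shift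
  have h_two := (tendsto_two_mul_zsmul_recurrence a).mono_left hU
  refine Frequently.filter_mono (Eventually.frequently ?_) hU
  filter_upwards [(h_two.prodMk_nhds hUk).eventually hk, h_shift.norm.eventually_lt_const hkρ]
    with n hn hnρ using ⟨hn n rfl, hnρ⟩

theorem scaleFilter_kap (h : Admissible a ρ) :
    scaleFilter (kap (arcIndicator a ρ)) = comap (fun m : ℤ => m ^ 2 • a) (𝓝 0) := by
  refine le_antisymm (tendsto_iff_comap.1 ?_) (le_scaleFilter_iff.2 fun N hN => ?_)
  · refine NormedAddGroup.tendsto_nhds_zero.2 fun ε hε => ?_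
    obtain ⟨δ, hδ0, hδ⟩ := exists_between (lt_min hε (sub_pos.2 h.lt_half))
    obtain ⟨hδε, hδρ⟩ := lt_min_iff.1 hδ
    obtain ⟨N, hN, hNδ⟩ := exists_forall_norm_lt_of_tendsto (antitone_mu _) h.tendsto_sq_mu hδ0
    filter_upwards [le_scaleFilter_iff.1 le_rfl N hN] with m hm
    exact (h.norm_sq_le_of_kap (by linarith) (fun n hn => (hNδ n hn).le) hm).trans_lt hδε
  · have h_mu := eventually_forall_eq_imp_of_comap_le h.scaleFilter_mu.ge hN
    have h_sq := (tendsto_comap (f := fun m : ℤ => m ^ 2 • a) (x := 𝓝 0)).neg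
    rw [neg_zero] at h_sq
    have h_neg := (tendsto_const_nhds (x := (0 : UnitAddCircle))).prodMk_nhds h_sq
    filter_upwards [h_neg.eventually h_mu.eventually_nhds] with m hm
    exact h.kap_of_eventually_mu hm

theorem nu_iff (h : Admissible a ρ) {m mt N : ℤ} :
    nu (arcIndicator a ρ) m mt N ↔
      ∀ᶠ n in recurrence a ⊓ comap (fun n : ℤ => (m + n) ^ 2 • a) (𝓝 0),
        kap (arcIndicator a ρ) (mt + n) N := by
  rw [Stmt18.nu_iff, h.scaleFilter_lam, h.scaleFilter_kap, comap_comap]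
  rfl

theorem scaleFilter_nu (h : Admissible a ρ) :
    scaleFilter (fun p : ℤ × ℤ => nu (arcIndicator a ρ) p.1 p.2) =
      comap (fun p : ℤ × ℤ => p.2 ^ 2 • a - p.1 ^ 2 • a) (𝓝 0) := by
  refine le_antisymm (tendsto_iff_comap.1 ?_) (le_scaleFilter_iff.2 fun N hN => ?_)
  · have h_sq : Tendsto (fun m : ℤ => m ^ 2 • a) (scaleFilter (kap (arcIndicator a ρ))) (𝓝 0) :=
      tendsto_iff_comap.2 h.scaleFilter_kap.le
    refine NormedAddGroup.tendsto_nhds_zero.2 fun ε hε => ?_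
    obtain ⟨N, hN, hNε⟩ := exists_forall_norm_lt_of_tendsto (antitone_kap _) h_sq (half_pos hε)
    filter_upwards [le_scaleFilter_iff.1 le_rfl N hN] with ⟨m, mt⟩ hp
    have := neBot_recurrence_inf_comap_add_sq h.addOrderOf_eq_zero m
    refine (le_of_tendsto (tendsto_add_sq_inf_comap_add_sq m mt).norm ?_).trans_lt (half_lt_self hε)
    exact (h.nu_iff.1 hp).mono fun n hn => (hNε _ hn).le
  · have h_kap := eventually_forall_eq_imp_of_comap_le h.scaleFilter_kap.ge hN
    filter_upwards [tendsto_comap.eventually h_kap.eventually_nhds] with p hp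
    refine h.nu_iff.2 ?_
    filter_upwards [(tendsto_add_sq_inf_comap_add_sq p.1 p.2).eventually hp] with n hn
    exact hn _ rfl

theorem del_iff_tendsto (h : Admissible a ρ) {m mt : ℤ} :
    del (arcIndicator a ρ) m mt ↔ Tendsto (fun n : ℤ => mt ^ 2 • a - (mt + n) ^ 2 • a)
      (comap (fun n : ℤ => m ^ 2 • a - (m + n) ^ 2 • a) (𝓝 0) ⊓
        comap (fun n : ℤ => n ^ 2 • a) (𝓝 0) ⊓ 𝓟 (Ioi 0)) (𝓝 0) := by
  rw [del_iff, h.scaleFilter_nu, h.scaleFilter_kap, tendsto_comap_iff, comap_comap]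
  rfl

theorem del_iff_dvd (h : Admissible a ρ) {m mt : ℤ} :
    del (arcIndicator a ρ) m mt ↔ m ∣ mt := by
  have h_sub (k n : ℤ) : k ^ 2 • a - (k + n) ^ 2 • a = -(k • (2 * n) • a + n ^ 2 • a) := by module
  rw [h.del_iff_tendsto]
  simp only [h_sub]
  constructor
  · intro h_lim
    obtain ⟨x, hx⟩ := exists_addOrderOf_eq h.addOrderOf_eq_zero m.natAbs
    obtain ⟨U, hU, hUx, hU_sq⟩ := exists_ultrafilter_tendsto_two_mul_sq h.addOrderOf_eq_zero x 0
    have h_tendsto (k : ℤ) :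
        Tendsto (fun n : ℤ => -(k • (2 * n) • a + n ^ 2 • a)) U (𝓝 (-(k • x))) := by
      simpa using ((hUx.const_smul k).add hU_sq).neg
    have hmx : m • x = 0 := by
      rw [← addOrderOf_dvd_iff_zsmul_eq_zero, hx, Int.natAbs_dvd]
    have hm := h_tendsto m
    rw [hmx, neg_zero] at hm
    have hU_le := le_inf (le_inf (tendsto_iff_comap.1 hm) (tendsto_iff_comap.1 hU_sq)) hU
    have hmtx := neg_eq_zero.1 (tendsto_nhds_unique (h_tendsto mt) (h_lim.mono_left hU_le))
    rwa [← addOrderOf_dvd_iff_zsmul_eq_zero, hx, Int.natAbs_dvd] at hmtx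
  · rintro ⟨c, rfl⟩
    have h_split (n : ℤ) : -((m * c) • (2 * n) • a + n ^ 2 • a) =
        c • -(m • (2 * n) • a + n ^ 2 • a) + (c - 1) • n ^ 2 • a := by module
    simp only [h_split]
    have hm := tendsto_comap (f := fun n : ℤ => -(m • (2 * n) • a + n ^ 2 • a)) (x := 𝓝 0)
    have h_sq := tendsto_comap (f := fun n : ℤ => n ^ 2 • a) (x := 𝓝 0)
    simpa using ((hm.mono_left (inf_le_left.trans inf_le_left)).const_smul c).add
      ((h_sq.mono_left (inf_le_left.trans inf_le_right)).const_smul (c - 1))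

end Admissible

end Arc

theorem norm_sq_zsmul_coe (α : ℝ) (n : ℤ) :
    ‖n ^ 2 • (α : UnitAddCircle)‖ = |α * n ^ 2 - round (α * n ^ 2)| := by
  rw [← AddCircle.coe_zsmul, UnitAddCircle.norm_eq, zsmul_eq_mul, Int.cast_pow, mul_comm]

theorem irrational_of_ne_rat_add_rat_mul {α ρ : ℝ}
    (hα : ¬∃ q r : ℚ, α = (q : ℝ) + (r : ℝ) * ρ) :
    Irrational α :=
  fun ⟨q, hq⟩ => hα ⟨q, 0, by simp [hq]⟩

theorem abs_sub_round_ne_of_ne_rat_add_rat_mul {α ρ : ℝ}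
    (hα : ¬∃ q r : ℚ, α = (q : ℝ) + (r : ℝ) * ρ) {n : ℤ} (hn : n ≠ 0) :
    |α * n ^ 2 - round (α * n ^ 2)| ≠ ρ := by
  intro h_eq
  have hn' : (n : ℝ) ≠ 0 := Int.cast_ne_zero.2 hn
  rcases eq_or_eq_neg_of_abs_eq h_eq with h | h
  · refine hα ⟨round (α * n ^ 2) / n ^ 2, 1 / n ^ 2, ?_⟩
    push_cast
    field_simp
    linarith
  · refine hα ⟨round (α * n ^ 2) / n ^ 2, -1 / n ^ 2, ?_⟩
    push_cast
    field_simp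
    linarith

theorem statement_general (α ρ : ℝ) (hρ0 : 0 < ρ) (hρ : ρ < 1 / 2) (hα : Irrational α)
    (hαρ : ∀ n : ℤ, 0 < n → |α * n ^ 2 - round (α * n ^ 2)| ≠ ρ) (g : ℤ → ℤ)
    (hg : ∀ n : ℤ, g n = if |α * n ^ 2 - round (α * n ^ 2)| < ρ then 1 else 0) (m mt : ℤ) :
    del g m mt ↔ m ∣ mt := by
  have h_adm : Admissible (α : UnitAddCircle) ρ :=
    ⟨addOrderOf_coe_eq_zero hα, hρ0, hρ, by simpa only [norm_sq_zsmul_coe] using hαρ⟩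
  have hg_arc : g = arcIndicator (α : UnitAddCircle) ρ := by
    ext n
    simp [hg, arcIndicator, indicator_apply, norm_sq_zsmul_coe]
  rw [hg_arc, h_adm.del_iff_dvd]

open scoped Classical in
theorem statement (α ρ : ℝ) (hρ0 : 0 < ρ) (hρ4 : ρ < 1 / 4)
    (hα : ¬ ∃ q r : ℚ, α = (q : ℝ) + (r : ℝ) * ρ)
    (g : ℤ → ℤ)
    (hg : ∀ n : ℤ, g n = if |α * n ^ 2 - round (α * n ^ 2)| < ρ then 1 else 0) :
    ∀ m mt : ℤ, 0 < m → 0 < mt → (del g m mt ↔ m ∣ mt) :=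
  fun m mt _ _ => statement_general α ρ hρ0 (by linarith) (irrational_of_ne_rat_add_rat_mul hα)
    (fun _ hn => abs_sub_round_ne_of_ne_rat_add_rat_mul hα hn.ne') g hg m mt

end Stmt18
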